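/- Suppose m ≥ 1 is an integer divisible by l(l−1). For every degree d with 2m − m/l ≤ d < 2m, setting γ = 2m − d, q = ⌈(lm − d)/(l − 1)⌉, a = d − q − γl, b = m − q − γ, and c = m − γl, one has dim_K (I^{(m)})_d = [ a² + 3a − l·(b² + b) − (c² + c) ] / 2 + 1. -/

import Mathlib

open MvPolynomial Filter

/-- The degree-`d` homogeneous component of a homogeneous ideal `J ⊆ K[x,y,z]`,
as a `K`-vector subspace. -/
noncomputable def degComp {K : Type*} [Field K] (J : Ideal (MvPolynomial (Fin 3) K)) (d : ℕ) :
    Submodule K (MvPolynomial (Fin 3) K) :=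
  Submodule.restrictScalars K J ⊓ homogeneousSubmodule (Fin 3) K d

/-- `dim_K J_d`. -/
noncomputable def hdim {K : Type*} [Field K] (J : Ideal (MvPolynomial (Fin 3) K)) (d : ℕ) : ℕ :=
  Module.finrank K (degComp J d)

/-- The subspace `R_1 · J_{d-1}` of products of linear forms with degree-`(d-1)` elements. -/
noncomputable def oneGen {K : Type*} [Field K] (J : Ideal (MvPolynomial (Fin 3) K)) (d : ℕ) :
    Submodule K (MvPolynomial (Fin 3) K) :=
  Submodule.span K
    {x | ∃ f ∈ homogeneousSubmodule (Fin 3) K 1, ∃ g ∈ degComp J (d - 1), x = f * g}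

/-- `v_d(J) = dim_K J_d / (R_1 · J_{d-1})`, the number of minimal generators of `J`
in degree `d`. -/
noncomputable def vnum {K : Type*} [Field K] (J : Ideal (MvPolynomial (Fin 3) K)) (d : ℕ) : ℕ :=
  Module.finrank K
    (↥(degComp J d) ⧸ Submodule.comap (degComp J d).subtype (oneGen J d))

/-!
A linear change of coordinates turns `p_{l+1}` into `(1 : 0 : 0)` and the line `L` into `x₀ = 0`.
Write a form of degree `d` as `F = ∑ k, x₀ ^ k * F_k(x₁, x₂)`. Then `F` vanishes to order `m` at a
point of the line iff every `F_k` vanishes there to order `m - k`, and `F` vanishes to order `m` at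
`(1 : 0 : 0)` iff `F_k = 0` whenever `d - k < m`. A binary form vanishes to order `m - k` at `l`
points iff it is divisible by the `(m - k)`-th powers of the `l` corresponding linear forms, so
`dim I^{(m)}_d = ∑ k ≤ d - m, max 0 (d - k + 1 - l (m - k))`. Read from its last term, this is the
arithmetic progression `c + 1, c + 1 - (l - 1), …`, whose last positive term has index
`b = ⌊c / (l - 1)⌋`.
-/

section PolynomialRing
variable {S : Type*} [CommRing S]

lemma mem_map_C_sup_span_X_pow_iff (J : Ideal S) (m : ℕ) (F : Polynomial S) :
    F ∈ (J.map Polynomial.C ⊔ Ideal.span {Polynomial.X}) ^ m ↔ ∀ k, F.coeff k ∈ J ^ (m - k) := by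
  set Q := J.map Polynomial.C ⊔ Ideal.span {(Polynomial.X : Polynomial S)}
  have coeff_zero_mem {G : Polynomial S} (hG : G ∈ Q) : G.coeff 0 ∈ J := by
    have : Q ≤ J.comap Polynomial.constantCoeff := by
      rw [sup_le_iff, Ideal.map_le_iff_le_comap, Ideal.span_singleton_le_iff_mem]
      exact ⟨fun s hs ↦ by simpa using hs, by simp⟩
    exact this hG
  constructor
  · intro hF
    induction m generalizing F with
    | zero => simp
    | succ m ih =>
      rw [pow_succ] at hF
      refine Submodule.mul_induction_on hF (fun F hF G hG k ↦ ?_) fun F G hF hG k ↦ ?_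
      · rw [Polynomial.coeff_mul]
        refine Ideal.sum_mem _ fun ⟨i, j⟩ hij ↦ ?_
        rw [Finset.HasAntidiagonal.mem_antidiagonal] at hij
        rcases Nat.eq_zero_or_pos j with rfl | hj
        · exact Ideal.pow_le_pow_right (by omega : m + 1 - k ≤ m - i + 1)
            (pow_succ J (m - i) ▸ Ideal.mul_mem_mul (ih F hF i) (coeff_zero_mem hG))
        · exact Ideal.mul_mem_right _ _ (Ideal.pow_le_pow_right (by omega) (ih F hF i))
      · exact Polynomial.coeff_add F G k ▸ add_mem (hF k) (hG k)
  · intro hF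
    rw [F.as_sum_range_C_mul_X_pow]
    refine Ideal.sum_mem _ fun k _ ↦ ?_
    have hC : Polynomial.C (F.coeff k) ∈ Q ^ (m - k) :=
      Ideal.pow_right_mono le_sup_left _
        (Ideal.map_pow Polynomial.C J _ ▸ Ideal.mem_map_of_mem _ (hF k))
    have hX : Polynomial.X ^ k ∈ Q ^ k :=
      Ideal.pow_mem_pow (Ideal.mem_sup_right (Ideal.mem_span_singleton_self _)) k
    exact Ideal.pow_le_pow_right (by omega) (pow_add Q (m - k) k ▸ Ideal.mul_mem_mul hC hX)

lemma comap_pow_ringEquiv {A B : Type*} [CommSemiring A] [CommSemiring B] (e : A ≃+* B)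
    (J : Ideal B) (m : ℕ) : (J ^ m).comap e = J.comap e ^ m := by
  simpa only [← Ideal.comap_symm, RingEquiv.symm_symm] using! Ideal.map_pow e.symm J m

end PolynomialRing

section PointIdeal
variable {R σ : Type*} [CommRing R]

/-- The ideal of all polynomials whose homogeneous components vanish at `w`, realised as the kernel
of `F ↦ F(w T)`; for `w ≠ 0` over a field this is the homogeneous prime ideal of the projective
point `[w]`. -/
noncomputable def pointIdeal (w : σ → R) : Ideal (MvPolynomial σ R) :=
  RingHom.ker (aeval fun i ↦ Polynomial.C (w i) * Polynomial.X :
    MvPolynomial σ R →ₐ[R] Polynomial R)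

lemma coeff_aeval_C_mul_X (w : σ → R) (F : MvPolynomial σ R) (n : ℕ) :
    (aeval (fun i ↦ Polynomial.C (w i) * Polynomial.X) F : Polynomial R).coeff n =
      eval w (homogeneousComponent n F) := by
  induction F using MvPolynomial.induction_on' with
  | monomial s a =>
    rw [homogeneousComponent_of_mem (isHomogeneous_monomial a rfl), aeval_monomial]
    have hprod : (s.prod fun i k ↦ (Polynomial.C (w i) * Polynomial.X) ^ k) =
        Polynomial.C (s.prod fun i k ↦ w i ^ k) * Polynomial.X ^ s.degree := by
      simp [Finsupp.prod, mul_pow, Finset.prod_mul_distrib, Finset.prod_pow_eq_pow_sum,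
        Finsupp.degree_apply]
    rw [hprod, Polynomial.algebraMap_eq, ← mul_assoc, ← Polynomial.C_mul,
      Polynomial.coeff_C_mul_X_pow, apply_ite (eval w), eval_monomial, map_zero]
  | add F G hF hG => simp [hF, hG]

lemma mem_pointIdeal_iff {w : σ → R} {F : MvPolynomial σ R} :
    F ∈ pointIdeal w ↔ ∀ n, eval w (homogeneousComponent n F) = 0 := by
  simp [pointIdeal, RingHom.mem_ker, Polynomial.ext_iff, coeff_aeval_C_mul_X]

instance isPrime_pointIdeal [IsDomain R] (w : σ → R) : (pointIdeal w).IsPrime :=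
  RingHom.ker_isPrime _

lemma pointIdeal_le_of_X_sub_mem {w : σ → R} {J : Ideal (MvPolynomial σ R)}
    (ℓ : MvPolynomial σ R) (h : ∀ i, X i - C (w i) * ℓ ∈ J) : pointIdeal w ≤ J := by
  intro F hF
  have hsubst : Ideal.Quotient.mkₐ R J = ((Ideal.Quotient.mkₐ R J).comp (Polynomial.aeval ℓ)).comp
      (aeval fun i ↦ Polynomial.C (w i) * Polynomial.X) := by
    ext i
    simpa using Ideal.Quotient.eq.2 (h i)
  have hF0 := DFunLike.congr_fun hsubst F
  rw [AlgHom.comp_apply, RingHom.mem_ker.1 hF, map_zero] at hF0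
  exact Ideal.Quotient.eq_zero_iff_mem.1 hF0

variable {n : ℕ}

lemma mem_pointIdeal_cons_zero_iff {v : Fin n → R} {F : MvPolynomial (Fin (n + 1)) R} :
    F ∈ pointIdeal (Fin.cons 0 v : Fin (n + 1) → R) ↔
      (MvPolynomial.finSuccEquiv R n F).coeff 0 ∈ pointIdeal v := by
  have h : (aeval fun i ↦ Polynomial.C ((Fin.cons 0 v : Fin (n + 1) → R) i) * Polynomial.X) =
      ((aeval fun i ↦ Polynomial.C (v i) * Polynomial.X :
        MvPolynomial (Fin n) R →ₐ[R] Polynomial R).comp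
      ((Polynomial.aeval (0 : MvPolynomial (Fin n) R)).restrictScalars R)).comp
        (MvPolynomial.finSuccEquiv R n).toAlgHom := by
    ext i : 1
    refine Fin.cases ?_ (fun i ↦ ?_) i <;>
      simp [MvPolynomial.finSuccEquiv_X_zero, MvPolynomial.finSuccEquiv_X_succ]
  rw [pointIdeal, RingHom.mem_ker, h]
  simp [pointIdeal, Polynomial.coeff_zero_eq_eval_zero]

lemma mem_pointIdeal_cons_zero_pow_iff {v : Fin n → R} {m : ℕ}
    {F : MvPolynomial (Fin (n + 1)) R} :
    F ∈ pointIdeal (Fin.cons 0 v : Fin (n + 1) → R) ^ m ↔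
      ∀ k, (MvPolynomial.finSuccEquiv R n F).coeff k ∈ pointIdeal v ^ (m - k) := by
  have h : pointIdeal (Fin.cons 0 v : Fin (n + 1) → R) =
      ((pointIdeal v).map Polynomial.C ⊔ Ideal.span {Polynomial.X}).comap
        (MvPolynomial.finSuccEquiv R n).toRingEquiv := by
    ext F
    rw [mem_pointIdeal_cons_zero_iff, Ideal.mem_comap, ← pow_one (_ ⊔ _),
      mem_map_C_sup_span_X_pow_iff]
    refine ⟨fun h k ↦ ?_, fun h ↦ by simpa using! h 0⟩
    cases k <;> simp [h]
  rw [h, ← comap_pow_ringEquiv, Ideal.mem_comap, mem_map_C_sup_span_X_pow_iff]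
  rfl

lemma mem_idealOfVars_iff {F : MvPolynomial σ R} :
    F ∈ idealOfVars σ R ↔ constantCoeff F = 0 := by
  rw [← pow_one (idealOfVars σ R), mem_pow_idealOfVars_iff']
  simp [constantCoeff_eq, Finsupp.degree_eq_zero_iff]

lemma pointIdeal_single_zero_one :
    pointIdeal (Pi.single 0 1 : Fin (n + 1) → R) =
      ((idealOfVars (Fin n) R).map Polynomial.C).comap
        (MvPolynomial.finSuccEquiv R n).toRingEquiv := by
  ext F
  have h : (aeval fun i ↦ Polynomial.C ((Pi.single 0 1 : Fin (n + 1) → R) i) * Polynomial.X) =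
      (Polynomial.mapAlgHom (aeval (0 : Fin n → R))).comp
        (MvPolynomial.finSuccEquiv R n).toAlgHom := by
    ext i : 1
    refine Fin.cases ?_ (fun i ↦ ?_) i <;>
      simp [MvPolynomial.finSuccEquiv_X_zero, MvPolynomial.finSuccEquiv_X_succ]
  rw [pointIdeal, RingHom.mem_ker, h, Ideal.mem_comap, Ideal.mem_map_C_iff]
  simp [Polynomial.ext_iff, mem_idealOfVars_iff]

lemma mem_pointIdeal_single_zero_one_pow_iff {m : ℕ} {F : MvPolynomial (Fin (n + 1)) R} :
    F ∈ pointIdeal (Pi.single 0 1 : Fin (n + 1) → R) ^ m ↔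
      ∀ k, (MvPolynomial.finSuccEquiv R n F).coeff k ∈ idealOfVars (Fin n) R ^ m := by
  rw [pointIdeal_single_zero_one, ← comap_pow_ringEquiv, ← Ideal.map_pow, Ideal.mem_comap,
    Ideal.mem_map_C_iff]
  rfl

end PointIdeal

section HomogeneousPart
variable {R σ : Type*} [CommRing R]

/-- The degree-`d` component `J_d` of an ideal `J` of a polynomial ring; `degComp` is the case of
three variables over a field. -/
noncomputable def homogeneousPart (J : Ideal (MvPolynomial σ R)) (d : ℕ) :
    Submodule R (MvPolynomial σ R) :=
  J.restrictScalars R ⊓ homogeneousSubmodule σ R d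

lemma mem_homogeneousPart {J : Ideal (MvPolynomial σ R)} {d : ℕ} {F : MvPolynomial σ R} :
    F ∈ homogeneousPart J d ↔ F ∈ J ∧ F.IsHomogeneous d :=
  Iff.rfl

instance finite_homogeneousPart {K : Type*} [Field K] [Finite σ] (J : Ideal (MvPolynomial σ K))
    (d : ℕ) : Module.Finite K (homogeneousPart J d) :=
  have : Module.Finite K (homogeneousSubmodule σ K d) :=
    Module.Finite.iff_fg.2 (homogeneousSubmodule_fg ..)
  Submodule.finiteDimensional_inf_right ..

variable {n d : ℕ}

lemma isHomogeneous_iff_finSuccEquiv_coeff {F : MvPolynomial (Fin (n + 1)) R} :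
    F.IsHomogeneous d ↔
      ∀ k, (k ≤ d → ((MvPolynomial.finSuccEquiv R n F).coeff k).IsHomogeneous (d - k)) ∧
        (d < k → (MvPolynomial.finSuccEquiv R n F).coeff k = 0) := by
  have degree_cons (k : ℕ) (s : Fin n →₀ ℕ) : (s.cons k).degree = k + s.degree := by
    simp [Finsupp.degree_eq_sum, Fin.sum_univ_succ]
  have isHomogeneous_iff (m : ℕ) (G : MvPolynomial (Fin m) R) (e : ℕ) :
      G.IsHomogeneous e ↔ ∀ s, coeff s G ≠ 0 → s.degree = e := by
    simp only [IsHomogeneous, IsWeightedHomogeneous, Finsupp.degree_eq_weight_one, Pi.one_def]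
  simp only [isHomogeneous_iff, MvPolynomial.ext_iff, finSuccEquiv_coeff_coeff, coeff_zero]
  constructor
  · intro h k
    constructor <;> grind
  · intro h s hs
    rw [← Finsupp.cons_tail s] at hs ⊢
    grind

lemma mem_homogeneousPart_iff_finSuccEquiv_coeff {I : Ideal (MvPolynomial (Fin (n + 1)) R)}
    {J : ℕ → Ideal (MvPolynomial (Fin n) R)}
    (hIJ : ∀ F, F ∈ I ↔ ∀ k, (MvPolynomial.finSuccEquiv R n F).coeff k ∈ J k)
    {F : MvPolynomial (Fin (n + 1)) R} :
    F ∈ homogeneousPart I d ↔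
      ∀ k, (k ≤ d → (MvPolynomial.finSuccEquiv R n F).coeff k ∈ homogeneousPart (J k) (d - k)) ∧
        (d < k → (MvPolynomial.finSuccEquiv R n F).coeff k = 0) := by
  rw [mem_homogeneousPart, hIJ, isHomogeneous_iff_finSuccEquiv_coeff, ← forall_and]
  refine forall_congr' fun k ↦ ?_
  rw [mem_homogeneousPart]
  rcases le_or_gt k d with hk | hk
  · simp [hk, hk.not_gt]
  · simp only [hk, hk.not_ge]
    grind [zero_mem]

lemma finrank_homogeneousPart_eq_sum {K : Type*} [Field K]
    {I : Ideal (MvPolynomial (Fin (n + 1)) K)} {J : ℕ → Ideal (MvPolynomial (Fin n) K)}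
    (hIJ : ∀ F, F ∈ I ↔ ∀ k, (MvPolynomial.finSuccEquiv K n F).coeff k ∈ J k) :
    Module.finrank K (homogeneousPart I d) =
      ∑ k ∈ Finset.range (d + 1), Module.finrank K (homogeneousPart (J k) (d - k)) := by
  let slice : homogeneousPart I d →ₗ[K] ∀ k : Fin (d + 1), homogeneousPart (J k) (d - k) :=
    LinearMap.pi fun k ↦ ((Polynomial.lcoeff _ k).restrictScalars K ∘ₗ
      (MvPolynomial.finSuccEquiv K n).toLinearMap).restrict fun F hF ↦
        ((mem_homogeneousPart_iff_finSuccEquiv_coeff hIJ).1 hF k).1 (Nat.le_of_lt_succ k.2)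
  have coe_slice (F k) :
      (slice F k : MvPolynomial (Fin n) K) = (MvPolynomial.finSuccEquiv K n F).coeff k := rfl
  have slice_injective : Function.Injective slice := by
    refine (injective_iff_map_eq_zero _).2 fun ⟨F, hF⟩ h ↦ ?_
    have coeff_eq_zero (k : ℕ) : (MvPolynomial.finSuccEquiv K n F).coeff k = 0 := by
      rcases le_or_gt k d with hk | hk
      · exact congrArg Subtype.val (congrFun h ⟨k, Nat.lt_succ_of_le hk⟩)
      · exact ((mem_homogeneousPart_iff_finSuccEquiv_coeff hIJ).1 hF k).2 hk
    simpa using (Polynomial.ext coeff_eq_zero : MvPolynomial.finSuccEquiv K n F = 0)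
  have slice_surjective : Function.Surjective slice := by
    intro g
    let G : Polynomial (MvPolynomial (Fin n) K) :=
      ∑ k : Fin (d + 1), Polynomial.monomial (k : ℕ) (g k : MvPolynomial (Fin n) K)
    have coeff_G (k : Fin (d + 1)) : G.coeff k = g k := by
      simp [G, Polynomial.coeff_monomial, Fin.val_inj]
    have coeff_G_of_lt {k : ℕ} (hk : d < k) : G.coeff k = 0 := by
      simp only [G, Polynomial.finsetSum_coeff, Polynomial.coeff_monomial]
      exact Finset.sum_eq_zero fun i _ ↦ if_neg (by omega)
    have hG : (MvPolynomial.finSuccEquiv K n).symm G ∈ homogeneousPart I d := by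
      refine (mem_homogeneousPart_iff_finSuccEquiv_coeff hIJ).2 fun k ↦ ?_
      rw [AlgEquiv.apply_symm_apply]
      exact ⟨fun hk ↦ coeff_G ⟨k, Nat.lt_succ_of_le hk⟩ ▸ (g ⟨k, _⟩).2, coeff_G_of_lt⟩
    refine ⟨⟨_, hG⟩, funext fun k ↦ Subtype.ext ?_⟩
    rw [coe_slice, AlgEquiv.apply_symm_apply, coeff_G]
  rw [(LinearEquiv.ofBijective slice ⟨slice_injective, slice_surjective⟩).finrank_eq,
    Module.finrank_pi_fintype,
    Finset.sum_range fun k ↦ Module.finrank K (homogeneousPart (J k) (d - k))]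

end HomogeneousPart

section Cone
variable {R σ : Type*} [CommRing R] {J : Ideal (MvPolynomial σ R)} {m e : ℕ}

lemma homogeneousPart_inf_idealOfVars_pow_of_le (h : m ≤ e) :
    homogeneousPart (J ⊓ idealOfVars σ R ^ m) e = homogeneousPart J e := by
  ext F
  have mem_pow (hF : F.IsHomogeneous e) : F ∈ idealOfVars σ R ^ m := by
    refine (mem_pow_idealOfVars_iff' ..).2 fun s hs ↦ ?_
    exact hF.coeff_eq_zero (by omega)
  simp only [mem_homogeneousPart, Ideal.mem_inf]
  tauto

lemma homogeneousPart_inf_idealOfVars_pow_of_lt (h : e < m) :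
    homogeneousPart (J ⊓ idealOfVars σ R ^ m) e = ⊥ := by
  refine (Submodule.eq_bot_iff _).2 fun F ⟨⟨_, hF⟩, hhom⟩ ↦ MvPolynomial.ext _ _ fun s ↦ ?_
  by_cases hs : s.degree = e
  · exact (mem_pow_idealOfVars_iff' ..).1 hF s (hs ▸ h)
  · exact IsHomogeneous.coeff_eq_zero hhom hs

-- `Pi.single 0 1` is the vertex of the cone over the points `v i` of the hyperplane `x₀ = 0`.
lemma finrank_homogeneousPart_cone {K ι : Type*} [Field K] {n : ℕ} (v : ι → Fin n → K)
    (m d : ℕ) :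
    Module.finrank K (homogeneousPart ((⨅ i, pointIdeal (Fin.cons 0 (v i) : Fin (n + 1) → K) ^ m) ⊓
        pointIdeal (Pi.single 0 1) ^ m) d) =
      ∑ k ∈ Finset.range (d + 1 - m),
        Module.finrank K (homogeneousPart (⨅ i, pointIdeal (v i) ^ (m - k)) (d - k)) := by
  rw [finrank_homogeneousPart_eq_sum
    (J := fun k ↦ (⨅ i, pointIdeal (v i) ^ (m - k)) ⊓ idealOfVars (Fin n) K ^ m) fun F ↦ ?_]
  · refine (Finset.sum_subset_zero_on_sdiff (Finset.range_mono (Nat.sub_le _ _))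
      (fun k hk ↦ ?_) fun k hk ↦ ?_).symm
    · rw [Finset.mem_sdiff, Finset.mem_range, Finset.mem_range] at hk
      rw [homogeneousPart_inf_idealOfVars_pow_of_lt (by omega), finrank_bot]
    · rw [Finset.mem_range] at hk
      rw [homogeneousPart_inf_idealOfVars_pow_of_le (by omega)]
  · simp only [Ideal.mem_inf, Ideal.mem_iInf, mem_pointIdeal_cons_zero_pow_iff,
      mem_pointIdeal_single_zero_one_pow_iff, forall_and, forall_comm (α := ι)]

end Cone

section PrincipalIdeal
variable {R σ : Type*} [CommRing R]

lemma finrank_homogeneousSubmodule [Nontrivial R] [Fintype σ] (d : ℕ) :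
    Module.finrank R (homogeneousSubmodule σ R d) = (Fintype.card σ).multichoose d := by
  classical
  let monomials : Module.Basis {s : σ →₀ ℕ | s.degree = d} R (homogeneousSubmodule σ R d) :=
    .ofRepr ((LinearEquiv.ofEq _ _ (homogeneousSubmodule_eq_finsupp_supported σ R d)).trans
      (AddMonoidAlgebra.supportedEquivFinsupp _))
  rw [Module.finrank_eq_nat_card_basis monomials, ← Sym.card_sym_eq_multichoose,
    ← Nat.card_eq_fintype_card]
  exact Nat.card_congr (Sym.equivNatSum σ d).symm

lemma homogeneousComponent_mul_of_isHomogeneous {Λ : MvPolynomial σ R} {e : ℕ}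
    (hΛ : Λ.IsHomogeneous e) (G : MvPolynomial σ R) (d : ℕ) :
    homogeneousComponent d (Λ * G) =
      if e ≤ d then Λ * homogeneousComponent (d - e) G else 0 := by
  let := gradedAlgebra (σ := σ) (R := R)
  simp only [← decomposition.decompose'_apply]
  exact DirectSum.coe_decompose_mul_of_left_mem (homogeneousSubmodule σ R) d hΛ (b := G)

lemma homogeneousPart_span_singleton_of_le {Λ : MvPolynomial σ R} {e d : ℕ}
    (hΛ : Λ.IsHomogeneous e) (h : e ≤ d) :
    homogeneousPart (Ideal.span {Λ}) d =
      (homogeneousSubmodule σ R (d - e)).map (LinearMap.mulLeft R Λ) := by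
  ext F
  rw [mem_homogeneousPart, Ideal.mem_span_singleton]
  constructor
  · rintro ⟨⟨G, rfl⟩, hF⟩
    refine ⟨homogeneousComponent (d - e) G, homogeneousComponent_isHomogeneous .., ?_⟩
    rw [LinearMap.mulLeft_apply, ← if_pos (c := e ≤ d) (t := Λ * _) h,
      ← homogeneousComponent_mul_of_isHomogeneous hΛ, homogeneousComponent_of_mem hF, if_pos rfl]
  · rintro ⟨G, hG, rfl⟩
    exact ⟨dvd_mul_right Λ G, Nat.add_sub_of_le h ▸ hΛ.mul hG⟩

lemma homogeneousPart_span_singleton_of_lt {Λ : MvPolynomial σ R} {e d : ℕ}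
    (hΛ : Λ.IsHomogeneous e) (h : d < e) :
    homogeneousPart (Ideal.span {Λ}) d = ⊥ := by
  refine (Submodule.eq_bot_iff _).2 fun F hF ↦ ?_
  obtain ⟨hdvd, hF⟩ := mem_homogeneousPart.1 hF
  obtain ⟨G, rfl⟩ := Ideal.mem_span_singleton.1 hdvd
  simpa [homogeneousComponent_of_mem hF, h.not_ge] using
    homogeneousComponent_mul_of_isHomogeneous hΛ G d

lemma finrank_homogeneousPart_span_singleton [IsDomain R] {Λ : MvPolynomial (Fin 2) R}
    (hΛ : Λ ≠ 0) {e : ℕ} (hhom : Λ.IsHomogeneous e) (d : ℕ) :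
    Module.finrank R (homogeneousPart (Ideal.span {Λ}) d) = d + 1 - e := by
  rcases le_or_gt e d with h | h
  · rw [homogeneousPart_span_singleton_of_le hhom h,
      ← (Submodule.equivMapOfInjective _ (mul_right_injective₀ hΛ) _).finrank_eq,
      finrank_homogeneousSubmodule, Fintype.card_fin, Nat.multichoose_two]
    omega
  · rw [homogeneousPart_span_singleton_of_lt hhom h, finrank_bot]
    omega

end PrincipalIdeal

section BinaryForms
variable {K : Type*} [Field K]

/-- The linear form in two variables whose zero is the point `[v]` of the projective line. -/
noncomputable def zeroForm (v : Fin 2 → K) : MvPolynomial (Fin 2) K :=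
  C (v 1) * X 0 - C (v 0) * X 1

lemma zeroForm_isHomogeneous (v : Fin 2 → K) : (zeroForm v).IsHomogeneous 1 := by
  refine .sub ?_ ?_
  · simpa using (isHomogeneous_C (Fin 2) (v 1)).mul (isHomogeneous_X K (0 : Fin 2))
  · simpa using (isHomogeneous_C (Fin 2) (v 0)).mul (isHomogeneous_X K (1 : Fin 2))

lemma zeroForm_ne_zero {v : Fin 2 → K} (hv : v ≠ 0) : zeroForm v ≠ 0 := by
  intro h
  refine hv (funext fun i ↦ ?_)
  fin_cases i
  · simpa [zeroForm] using congrArg (eval ![0, 1]) h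
  · simpa [zeroForm] using congrArg (eval ![1, 0]) h

lemma zeroForm_mem_pointIdeal_iff {v w : Fin 2 → K} :
    zeroForm v ∈ pointIdeal w ↔ v 1 * w 0 = v 0 * w 1 := by
  rw [pointIdeal, RingHom.mem_ker]
  simp only [zeroForm, map_sub, map_mul, aeval_X, algHom_C, Polynomial.algebraMap_eq]
  rw [← mul_assoc, ← mul_assoc, ← sub_mul, mul_eq_zero_iff_right Polynomial.X_ne_zero, sub_eq_zero,
    ← Polynomial.C_mul, ← Polynomial.C_mul, Polynomial.C_inj]

lemma zeroForm_dvd_C_mul_X_sub_C_mul_X (v : Fin 2 → K) (i j : Fin 2) :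
    zeroForm v ∣ C (v j) * X i - C (v i) * X j := by
  fin_cases i <;> fin_cases j
  · simp
  · exact dvd_rfl
  · exact (dvd_neg.2 dvd_rfl).trans (dvd_of_eq (neg_sub _ _))
  · simp

lemma pointIdeal_eq_span_zeroForm {v : Fin 2 → K} (hv : v ≠ 0) :
    pointIdeal v = Ideal.span {zeroForm v} := by
  refine le_antisymm ?_ ?_
  · obtain ⟨j, hj⟩ := Function.ne_iff.1 hv
    refine pointIdeal_le_of_X_sub_mem (C (v j)⁻¹ * X j) fun i ↦ ?_
    have hC : C (v j)⁻¹ * C (v j) = (1 : MvPolynomial (Fin 2) K) := by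
      rw [← C_mul, inv_mul_cancel₀ hj, C_1]
    have heq : X i - C (v i) * (C (v j)⁻¹ * X j) =
        C (v j)⁻¹ * (C (v j) * X i - C (v i) * X j) := by
      linear_combination (-X i) * hC
    rw [Ideal.mem_span_singleton, heq]
    exact (zeroForm_dvd_C_mul_X_sub_C_mul_X v i j).mul_left _
  · rw [Ideal.span_singleton_le_iff_mem, zeroForm_mem_pointIdeal_iff, mul_comm]

lemma prime_zeroForm {v : Fin 2 → K} (hv : v ≠ 0) : Prime (zeroForm v) :=
  (Ideal.span_singleton_prime (zeroForm_ne_zero hv)).1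
    (pointIdeal_eq_span_zeroForm hv ▸ isPrime_pointIdeal v)

lemma isRelPrime_zeroForm {v w : Fin 2 → K} (hv : v ≠ 0) (hvw : ∀ c : K, c • v ≠ w) :
    IsRelPrime (zeroForm v) (zeroForm w) := by
  rw [(prime_zeroForm hv).irreducible.isRelPrime_iff_not_dvd, ← Ideal.mem_span_singleton,
    ← pointIdeal_eq_span_zeroForm hv, zeroForm_mem_pointIdeal_iff]
  intro h
  obtain ⟨j, hj⟩ := Function.ne_iff.1 hv
  refine hvw (w j / v j) (funext fun i ↦ ?_)
  rw [Pi.smul_apply, smul_eq_mul, div_mul_eq_mul_div, div_eq_iff hj]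
  fin_cases i <;> fin_cases j <;> grind

lemma iInf_pointIdeal_pow {ι : Type*} [Fintype ι] {v : ι → Fin 2 → K} (hv : ∀ i, v i ≠ 0)
    (hdist : ∀ i j, i ≠ j → ∀ c : K, c • v i ≠ v j) (r : ℕ) :
    ⨅ i, pointIdeal (v i) ^ r = Ideal.span {∏ i, zeroForm (v i) ^ r} := by
  ext F
  simp only [Ideal.mem_iInf, pointIdeal_eq_span_zeroForm (hv _), Ideal.span_singleton_pow,
    Ideal.mem_span_singleton]
  refine ⟨Fintype.prod_dvd_of_isRelPrime fun i j hij ↦ ?_, fun h i ↦ ?_⟩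
  · exact (isRelPrime_zeroForm (hv i) (hdist i j hij)).pow
  · exact (Finset.dvd_prod_of_mem _ (Finset.mem_univ i)).trans h

lemma finrank_homogeneousPart_iInf_pointIdeal_pow {ι : Type*} [Fintype ι] {v : ι → Fin 2 → K}
    (hv : ∀ i, v i ≠ 0) (hdist : ∀ i j, i ≠ j → ∀ c : K, c • v i ≠ v j) (r d : ℕ) :
    Module.finrank K (homogeneousPart (⨅ i, pointIdeal (v i) ^ r) d) =
      d + 1 - Fintype.card ι * r := by
  rw [iInf_pointIdeal_pow hv hdist]
  refine finrank_homogeneousPart_span_singleton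
    (Finset.prod_ne_zero_iff.2 fun i _ ↦ pow_ne_zero r (zeroForm_ne_zero (hv i))) ?_ d
  simpa using IsHomogeneous.prod Finset.univ (fun i ↦ zeroForm (v i) ^ r) (fun _ ↦ r)
    fun i _ ↦ by simpa using (zeroForm_isHomogeneous (v i)).pow r

end BinaryForms

section LinearSubstitution
variable {R σ : Type*} [CommRing R] [Fintype σ] [DecidableEq σ]

/-- The substitution `F ↦ F ∘ f` of a linear map `f` into polynomials. -/
noncomputable def linSubst (f : (σ → R) →ₗ[R] (σ → R)) : MvPolynomial σ R →ₐ[R] MvPolynomial σ R :=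
  bind₁ (LinearMap.toMatrix' f).toMvPolynomial

lemma linSubst_X (f : (σ → R) →ₗ[R] (σ → R)) (i : σ) :
    linSubst f (X i) = (LinearMap.toMatrix' f).toMvPolynomial i :=
  bind₁_X_right ..

lemma linSubst_id : linSubst LinearMap.id = AlgHom.id R (MvPolynomial σ R) := by
  ext i : 1
  simp [linSubst_X]

lemma linSubst_comp (f g : (σ → R) →ₗ[R] (σ → R)) :
    linSubst (g ∘ₗ f) = (linSubst f).comp (linSubst g) := by
  ext i : 1
  rw [AlgHom.comp_apply, linSubst_X, linSubst_X, LinearMap.toMatrix'_comp,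
    Matrix.toMvPolynomial_mul, linSubst]

lemma isHomogeneous_linSubst {F : MvPolynomial σ R} {d : ℕ} (hF : F.IsHomogeneous d)
    (f : (σ → R) →ₗ[R] (σ → R)) : (linSubst f F).IsHomogeneous d := by
  simpa using! hF.aeval _ (Matrix.toMvPolynomial_isHomogeneous (LinearMap.toMatrix' f))

lemma comap_linSubst_pointIdeal (f : (σ → R) →ₗ[R] (σ → R)) (w : σ → R) :
    (pointIdeal w).comap (linSubst f) = pointIdeal (f w) := by
  have h : (aeval fun i ↦ Polynomial.C (w i) * Polynomial.X : MvPolynomial σ R →ₐ[R] _).comp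
      (linSubst f) = aeval fun i ↦ Polynomial.C (f w i) * Polynomial.X := by
    ext i : 1
    rw [AlgHom.comp_apply, linSubst_X, aeval_X, ← LinearMap.toMatrix'_mulVec f w]
    simp [Matrix.toMvPolynomial, Matrix.mulVec, dotProduct, aeval_monomial, Finset.sum_mul,
      mul_assoc]
  rw [pointIdeal, pointIdeal, ← h]
  rfl

/-- The linear change of variables `F ↦ F ∘ φ`, as an automorphism of the polynomial ring. -/
noncomputable def linSubstEquiv (φ : (σ → R) ≃ₗ[R] (σ → R)) :
    MvPolynomial σ R ≃ₐ[R] MvPolynomial σ R :=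
  .ofAlgHom (linSubst φ.toLinearMap) (linSubst φ.symm.toLinearMap)
    (by rw [← linSubst_comp, LinearEquiv.symm_comp, linSubst_id])
    (by rw [← linSubst_comp, LinearEquiv.comp_symm, linSubst_id])

lemma finrank_homogeneousPart_comap_linSubstEquiv (φ : (σ → R) ≃ₗ[R] (σ → R))
    (J : Ideal (MvPolynomial σ R)) (d : ℕ) :
    Module.finrank R (homogeneousPart (J.comap (linSubstEquiv φ).toRingEquiv) d) =
      Module.finrank R (homogeneousPart J d) := by
  have hmap : homogeneousPart J d =
      (homogeneousPart (J.comap (linSubstEquiv φ).toRingEquiv) d).map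
        ((linSubstEquiv φ).toLinearEquiv : MvPolynomial σ R →ₗ[R] MvPolynomial σ R) := by
    ext F
    rw [Submodule.mem_map_equiv]
    refine and_congr ?_ ⟨fun hF ↦ isHomogeneous_linSubst hF φ.symm.toLinearMap, fun hF ↦ ?_⟩
    · simp
    · rw [← (linSubstEquiv φ).apply_symm_apply F]
      exact isHomogeneous_linSubst hF φ.toLinearMap
  rw [hmap, LinearEquiv.finrank_map_eq]

lemma comap_linSubstEquiv_pointIdeal_pow (φ : (σ → R) ≃ₗ[R] (σ → R))
    (w : σ → R) (m : ℕ) :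
    (pointIdeal (φ w) ^ m).comap (linSubstEquiv φ.symm).toRingEquiv = pointIdeal w ^ m := by
  rw [comap_pow_ringEquiv]
  congr 1
  simpa using! comap_linSubst_pointIdeal φ.symm.toLinearMap (φ w)

end LinearSubstitution

lemma exists_linearEquiv_single_zero {K : Type*} [Field K] {n : ℕ}
    (L : Module.Dual K (Fin (n + 1) → K)) {q : Fin (n + 1) → K} (hq : L q ≠ 0) :
    ∃ φ : (Fin (n + 1) → K) ≃ₗ[K] (Fin (n + 1) → K),
      φ q = Pi.single 0 1 ∧ ∀ x, L x = 0 → φ x 0 = 0 := by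
  have hL : L ≠ 0 := fun h ↦ hq (by simp [h])
  have finrank_ker : Module.finrank K L.ker = n := by
    have := Module.Dual.finrank_ker_add_one_of_ne_zero hL
    rw [Module.finrank_fin_fun] at this
    omega
  let b := Module.Basis.mkFinCons q (Module.finBasisOfFinrankEq K L.ker finrank_ker)
    (fun c x hx h ↦ by simpa [LinearMap.mem_ker.1 hx, hq] using congrArg L h)
    fun z ↦ ⟨-(L z / L q), by simp [hq]⟩
  have hb : ⇑b = Fin.cons q (Subtype.val ∘ Module.finBasisOfFinrankEq K L.ker finrank_ker) :=
    Module.Basis.coe_mkFinCons ..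
  refine ⟨b.equivFun, ?_, fun x hx ↦ ?_⟩
  · ext i
    simpa [hb, Pi.single_apply, eq_comm] using b.equivFun_self 0 i
  · have := congrArg L (b.sum_equivFun x)
    simpa [hb, Fin.sum_univ_succ, hx, hq] using this

lemma finrank_homogeneousPart_collinear_inf {K ι : Type*} [Field K] [Fintype ι]
    {p : ι → Fin 3 → K} {q : Fin 3 → K}
    (hp : ∀ i, p i ≠ 0) (hdist : ∀ i j, i ≠ j → ∀ c : K, c • p i ≠ p j)
    {L : Module.Dual K (Fin 3 → K)} (hLp : ∀ i, L (p i) = 0) (hLq : L q ≠ 0) (m d : ℕ) :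
    Module.finrank K (homogeneousPart ((⨅ i, pointIdeal (p i) ^ m) ⊓ pointIdeal q ^ m) d) =
      ∑ k ∈ Finset.range (d + 1 - m), (d - k + 1 - Fintype.card ι * (m - k)) := by
  obtain ⟨φ, hφq, hφ⟩ := exists_linearEquiv_single_zero L hLq
  have exists_cons (i : ι) : ∃ v, φ (p i) = Fin.cons 0 v :=
    ⟨Fin.tail (φ (p i)), by rw [← hφ _ (hLp i), Fin.cons_self_tail]⟩
  choose v hv using exists_cons
  have hv0 (i : ι) : v i ≠ 0 := by
    intro h
    refine hp i (φ.map_eq_zero_iff.1 ?_)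
    rw [hv, h]
    exact Matrix.cons_zero_zero
  have hvdist (i j : ι) (hij : i ≠ j) (c : K) : c • v i ≠ v j := by
    intro h
    refine hdist i j hij c (φ.injective ?_)
    rw [map_smul, hv, hv, ← h]
    exact (Matrix.smul_cons c 0 (v i)).trans (by rw [smul_zero]; rfl)
  have hcomap : (⨅ i, pointIdeal (p i) ^ m) ⊓ pointIdeal q ^ m =
      ((⨅ i, pointIdeal (Fin.cons 0 (v i) : Fin 3 → K) ^ m) ⊓
        pointIdeal (Pi.single 0 1) ^ m).comap (linSubstEquiv φ.symm).toRingEquiv := by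
    simp only [Ideal.comap_inf, Ideal.comap_iInf, ← hv, ← hφq, comap_linSubstEquiv_pointIdeal_pow]
  rw [hcomap, finrank_homogeneousPart_comap_linSubstEquiv, finrank_homogeneousPart_cone]
  exact Finset.sum_congr rfl fun k _ ↦
    finrank_homogeneousPart_iInf_pointIdeal_pow hv0 hvdist _ _

lemma iInf_fin_succ_eq_castSucc_inf_last {α : Type*} [CompleteLattice α] {l : ℕ}
    (f : Fin (l + 1) → α) : ⨅ i, f i = (⨅ i : Fin l, f i.castSucc) ⊓ f (Fin.last l) := by
  rw [← finSuccEquivLast.symm.iInf_comp, iInf_option, inf_comm]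
  simp

section Arithmetic

lemma mul_sub_ceilDiv {s : ℕ} (hs : 0 < s) (N c : ℕ) : (s * N - c) ⌈/⌉ s = N - c / s := by
  refine eq_of_forall_ge_iff fun x ↦ ?_
  rw [ceilDiv_le_iff_le_mul hs, Nat.sub_le_iff_le_add', Nat.sub_le_iff_le_add',
    ← Nat.sub_le_iff_le_add, ← Nat.sub_le_iff_le_add, ← Nat.mul_sub, Nat.le_div_iff_mul_le hs,
    mul_comm]

lemma two_mul_sum_range_sub_mul {R : Type*} [CommRing R] (x s : R) (b : ℕ) :
    2 * ∑ j ∈ Finset.range (b + 1), (x - s * j) = (b + 1) * (2 * x - s * b) := by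
  induction b with
  | zero => simp
  | succ b ih =>
    rw [Finset.sum_range_succ, mul_add, ih]
    push_cast
    ring

lemma two_mul_sum_range_tsub_mul {s c N : ℕ} (hs : 0 < s) (hN : c / s ≤ N) :
    2 * ((∑ j ∈ Finset.range (N + 1), (c + 1 - s * j) : ℕ) : ℤ) =
      ((c / s : ℕ) + 1) * (2 * (c + 1) - s * (c / s : ℕ)) := by
  have hsub : ∑ j ∈ Finset.range (N + 1), (c + 1 - s * j) =
      ∑ j ∈ Finset.range (c / s + 1), (c + 1 - s * j) := by
    refine (Finset.sum_subset (Finset.range_mono (by omega)) fun j _ hj ↦ ?_).symm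
    rw [Finset.mem_range, not_lt, Nat.succ_le_iff, Nat.div_lt_iff_lt_mul hs, mul_comm] at hj
    omega
  rw [hsub, ← two_mul_sum_range_sub_mul, Nat.cast_sum]
  congr 1
  refine Finset.sum_congr rfl fun j hj ↦ ?_
  rw [Finset.mem_range, Nat.lt_succ_iff, Nat.le_div_iff_mul_le hs, mul_comm] at hj
  rw [Nat.cast_sub (by omega)]
  push_cast
  ring

lemma sum_range_eq_sum_range_sub_mul {l m d γ : ℕ} (hl : 1 ≤ l) (hd : d + γ = 2 * m)
    (hγ : γ * l ≤ m) :
    ∑ k ∈ Finset.range (d + 1 - m), (d - k + 1 - l * (m - k)) =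
      ∑ j ∈ Finset.range (m - γ + 1), (m - γ * l + 1 - (l - 1) * j) := by
  have hγm : γ ≤ m := (Nat.le_mul_of_pos_right γ hl).trans hγ
  rw [show d + 1 - m = m - γ + 1 by omega, ← Finset.sum_flip]
  refine Finset.sum_congr rfl fun j hj ↦ ?_
  rw [Finset.mem_range, Nat.lt_succ_iff] at hj
  have hexp : l * (γ + j) = γ * l + (l - 1) * j + j := by
    obtain ⟨s, rfl⟩ := Nat.exists_eq_add_of_le' hl
    rw [Nat.add_sub_cancel]
    ring
  rw [show d - (m - γ - j) + 1 = m + j + 1 by omega, show m - (m - γ - j) = γ + j by omega, hexp]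
  omega

lemma sum_range_eq_closedForm {l m d γ : ℕ} (hl : 2 ≤ l) (hd : d + γ = 2 * m) (hγ : γ * l ≤ m)
    {q : ℕ} (hq : q = (l * m - d) ⌈/⌉ (l - 1)) {a b c : ℤ} (ha : a = (d : ℤ) - q - γ * l)
    (hb : b = (m : ℤ) - q - γ) (hc : c = (m : ℤ) - γ * l) :
    ((∑ k ∈ Finset.range (d + 1 - m), (d - k + 1 - l * (m - k)) : ℕ) : ℤ) =
      (a ^ 2 + 3 * a - l * (b ^ 2 + b) - (c ^ 2 + c)) / 2 + 1 := by
  have hγm : γ ≤ m := (Nat.le_mul_of_pos_right γ (by omega)).trans hγ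
  have hs : 0 < l - 1 := by omega
  set c' := m - γ * l with hc'
  have hc'N : c' / (l - 1) ≤ m - γ := by
    have := Nat.le_mul_of_pos_right γ (by omega : 0 < l)
    exact (Nat.div_le_self _ _).trans (by omega)
  have hq' : q = m - γ - c' / (l - 1) := by
    rw [hq, ← mul_sub_ceilDiv hs]
    congr 1
    obtain ⟨s, rfl⟩ := Nat.exists_eq_add_of_le' (by omega : 1 ≤ l)
    obtain ⟨N, rfl⟩ := Nat.exists_eq_add_of_le hγm
    have hexp : (s + 1) * (γ + N) = γ * (s + 1) + s * N + N := by ring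
    simp only [Nat.add_sub_cancel, Nat.add_sub_cancel_left]
    omega
  have hbq : b = (c' / (l - 1) : ℕ) := by omega
  have hcc : c = c' := by omega
  have hab : a = b + c := by omega
  have hsum := two_mul_sum_range_tsub_mul hs hc'N
  rw [← sum_range_eq_sum_range_sub_mul (by omega) hd hγ, ← hbq, ← hcc] at hsum
  have hcast : ((l - 1 : ℕ) : ℤ) = l - 1 := by omega
  have hnum : a ^ 2 + 3 * a - l * (b ^ 2 + b) - (c ^ 2 + c) =
      2 * (((∑ k ∈ Finset.range (d + 1 - m), (d - k + 1 - l * (m - k)) : ℕ) : ℤ) - 1) := by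
    rw [mul_sub, hsum, hab, hcast]
    ring
  rw [hnum, Int.mul_ediv_cancel_left _ two_ne_zero, sub_add_cancel]

end Arithmetic

theorem stmt_3_general
    (K : Type*) [Field K] (l : ℕ) (hl : 2 ≤ l) (p : Fin (l + 1) → Fin 3 → K)
    (hdist : ∀ i j, i ≠ j → ∀ c : K, c • p i ≠ p j) (L : Fin 3 → K)
    (hon : ∀ i : Fin (l + 1), (i : ℕ) < l → ∑ j, L j * p i j = 0)
    (hoff : ∑ j, L j * p (Fin.last l) j ≠ 0)
    (P : Fin (l + 1) → Ideal (MvPolynomial (Fin 3) K))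
    (hP : ∀ i F, F ∈ P i ↔ ∀ n, eval (p i) (homogeneousComponent n F) = 0)
    (m : ℕ) (Im : Ideal (MvPolynomial (Fin 3) K)) (hIm : Im = ⨅ i, P i ^ m) :
    ∀ d : ℕ, 2 * m - m / l ≤ d → d ≤ 2 * m →
      ∀ γ q : ℕ, γ = 2 * m - d → q = (l * m - d) ⌈/⌉ (l - 1) →
      ∀ a b c : ℤ, a = (d : ℤ) - q - γ * l → b = (m : ℤ) - q - γ → c = (m : ℤ) - γ * l →
      (hdim Im d : ℤ) =
        (a ^ 2 + 3 * a - l * (b ^ 2 + b) - (c ^ 2 + c)) / 2 + 1 := by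
  intro d hd hd' γ q hγ hq a b c ha hb hc
  obtain rfl : P = fun i ↦ pointIdeal (p i) :=
    funext fun i ↦ Ideal.ext fun F ↦ (hP i F).trans mem_pointIdeal_iff.symm
  have hp (i : Fin l) : p i.castSucc ≠ 0 := fun h ↦
    hdist _ _ (Fin.castSucc_ne_last i).symm 0 (by rw [zero_smul, h])
  have hcollinear (i : Fin l) : Fintype.linearCombination K L (p i.castSucc) = 0 := by
    simpa [Fintype.linearCombination_apply, mul_comm] using hon i.castSucc i.2
  have hnotCollinear : Fintype.linearCombination K L (p (Fin.last l)) ≠ 0 := by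
    simpa [Fintype.linearCombination_apply, mul_comm] using hoff
  have hγl : γ * l ≤ m := (Nat.le_div_iff_mul_le (by omega)).1 (by omega)
  have hfinrank := finrank_homogeneousPart_collinear_inf hp
    (fun i j hij ↦ hdist _ _ (Fin.castSucc_injective l |>.ne hij)) hcollinear hnotCollinear m d
  have hhdim : hdim Im d = Module.finrank K (homogeneousPart Im d) := rfl
  rw [hhdim, hIm, iInf_fin_succ_eq_castSucc_inf_last, hfinrank, Fintype.card_fin,
    sum_range_eq_closedForm hl (by omega) hγl hq ha hb hc]

theorem stmt_3
    (K : Type*) [Field K] [CharZero K]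
    -- `l > 2` points on a line plus one point off the line
    (l : ℕ) (hl : 2 < l)
    (p : Fin (l + 1) → Fin 3 → K) (hp0 : ∀ i, p i ≠ 0)
    (hdist : ∀ i j, i ≠ j → ∀ c : K, c • p i ≠ p j)
    (L : Fin 3 → K) (hL : L ≠ 0)
    (hon : ∀ i : Fin (l + 1), (i : ℕ) < l → ∑ j, L j * p i j = 0)
    (hoff : ∑ j, L j * p (Fin.last l) j ≠ 0)
    -- `P i` is the homogeneous prime ideal of all forms vanishing at `p i`
    (P : Fin (l + 1) → Ideal (MvPolynomial (Fin 3) K))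
    (hP : ∀ i F, F ∈ P i ↔ ∀ n, eval (p i) (homogeneousComponent n F) = 0)
    -- the uniform fat point ideal `I^{(m)} = P_1^m ∩ ⋯ ∩ P_{l+1}^m`
    (m : ℕ) (hm : 1 ≤ m) (hdvd : l * (l - 1) ∣ m)
    (Im : Ideal (MvPolynomial (Fin 3) K)) (hIm : Im = ⨅ i, P i ^ m) :
    ∀ d : ℕ, 2 * m - m / l ≤ d → d < 2 * m →
      -- `γ = 2m − d`, `q = ⌈(lm − d)/(l − 1)⌉`, `a = d − q − γl`, `b = m − q − γ`, `c = m − γl`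
      ∀ γ q : ℕ, γ = 2 * m - d → q = (l * m - d) ⌈/⌉ (l - 1) →
      ∀ a b c : ℤ, a = (d : ℤ) - q - γ * l → b = (m : ℤ) - q - γ → c = (m : ℤ) - γ * l →
      (hdim Im d : ℤ) =
        (a ^ 2 + 3 * a - l * (b ^ 2 + b) - (c ^ 2 + c)) / 2 + 1 :=
  fun d hd hd2 ↦ stmt_3_general K l hl.le p hdist L hon hoff P hP m Im hIm d hd hd2.le
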